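/- For every ε > 0 there exists t₀ such that for every t ≥ t₀ there is a finite simple graph G that admits a quasi-K_t-minor but does not admit a K_⌈(2/3+ε)t⌉-minor. -/

import Mathlib

/-- `B` is a family of bags witnessing a `K_t`-minor of `G`: the bags are nonempty,
pairwise disjoint, each induces a connected subgraph, and any two bags are joined by an edge. -/
def IsKMinorBags {V : Type*} (G : SimpleGraph V) {t : ℕ} (B : Fin t → Set V) : Prop :=
  (∀ i, (B i).Nonempty) ∧
  (Pairwise fun i j => Disjoint (B i) (B j)) ∧
  (∀ i, (G.induce (B i)).Connected) ∧
  (∀ i j, i ≠ j → ∃ u ∈ B i, ∃ v ∈ B j, G.Adj u v)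

/-- `G` admits a `K_t`-minor. -/
def HasKMinor {V : Type*} (G : SimpleGraph V) (t : ℕ) : Prop :=
  ∃ B : Fin t → Set V, IsKMinorBags G B

/-- `B` is a family of bags witnessing a quasi-`K_t`-minor of `G`: the bags are nonempty,
pairwise disjoint, and the union of any two distinct bags induces a connected subgraph. -/
def IsQuasiKMinorBags {V : Type*} (G : SimpleGraph V) {t : ℕ} (B : Fin t → Set V) : Prop :=
  (∀ i, (B i).Nonempty) ∧
  (Pairwise fun i j => Disjoint (B i) (B j)) ∧
  (∀ i j, i ≠ j → (G.induce (B i ∪ B j)).Connected)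

/-- `G` admits a quasi-`K_t`-minor. -/
def HasQuasiKMinor {V : Type*} (G : SimpleGraph V) (t : ℕ) : Prop :=
  ∃ B : Fin t → Set V, IsQuasiKMinorBags G B

/-!
Take the complete multipartite graph with `t` parts of size two and delete one edge, chosen at
random, between each pair of parts. The remaining three edges between two parts form a path through
all four vertices, so the parts are the bags of a quasi-`K_t`-minor.

In a complete minor at most `2t/3` bags have three or more vertices. A smaller bag is connected and
therefore meets each part at most once. If there were more than `8m` smaller bags, then, each part
meeting at most two of them, `2m` of them would lie over pairwise disjoint sets of parts. For `m`
given bags and `m` others in such a position, the `m²` events that a left and a right bag have no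
edge between them contain independent events of probability at least `2⁻⁸`, so all left-right pairs
are adjacent with probability at most `(1 - 2⁻⁸)^(m²)`. There are at most `(2t)^(4m)` such
configurations, hence for `m` a large multiple of `log t` some choice of deleted edges excludes
them all, and complete minors have at most `2t/3 + O(log t)` bags.
-/

section Counting

open Finset

variable {E A κ : Type*} [DecidableEq E] [Fintype A] [DecidableEq A]

theorem card_le_pow_mul_card_filter_forall_eq (c : E → A) (S : Finset E) (P : Finset (E → A))
    (hP : ∀ f ∈ P, S.piecewise c f ∈ P) :
    #P ≤ Fintype.card A ^ #S * #{f ∈ P | ∀ e ∈ S, f e = c e} := by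
  classical
  have hmaps : ∀ f ∈ P, S.piecewise c f ∈ ({f ∈ P | ∀ e ∈ S, f e = c e} : Finset (E → A)) :=
    fun f hf => mem_filter.2 ⟨hP f hf, fun e he => piecewise_eq_of_mem S c f he⟩
  refine card_le_mul_card_image_of_maps_to hmaps _ fun g _ => ?_
  have restrict_injOn : Set.InjOn (fun (f : E → A) (e : S) => f e)
      ({f ∈ P | S.piecewise c f = g} : Finset (E → A)) := by
    intro f hf f' hf' hff'
    have hout : S.piecewise c f = S.piecewise c f' :=
      (mem_filter.1 hf).2.trans (mem_filter.1 hf').2.symm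
    ext e
    by_cases he : e ∈ S
    · exact congrFun hff' ⟨e, he⟩
    · simpa only [piecewise_eq_of_notMem _ _ _ he] using congrFun hout e
  simpa using card_le_card_of_injOn (t := univ) _ (fun _ _ => mem_univ _) restrict_injOn

theorem card_filter_not_forall_eq_le [Nonempty A] (c : E → A) {S : Finset E} {d : ℕ}
    (hcard : #S ≤ d) {P : Finset (E → A)} (hP : ∀ f ∈ P, S.piecewise c f ∈ P) :
    (#{f ∈ P | ¬ ∀ e ∈ S, f e = c e} : ℝ) ≤ (1 - ((Fintype.card A : ℝ) ^ d)⁻¹) * #P := by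
  have hA : (1 : ℝ) ≤ Fintype.card A := Nat.one_le_cast.2 Fintype.card_pos
  have hP_le : (#P : ℝ) ≤ (Fintype.card A : ℝ) ^ d * #{f ∈ P | ∀ e ∈ S, f e = c e} := calc
    (#P : ℝ) ≤ (Fintype.card A : ℝ) ^ #S * #{f ∈ P | ∀ e ∈ S, f e = c e} := by
      exact_mod_cast card_le_pow_mul_card_filter_forall_eq c S P hP
    _ ≤ (Fintype.card A : ℝ) ^ d * #{f ∈ P | ∀ e ∈ S, f e = c e} := by gcongr
  have hagree_ge : ((Fintype.card A : ℝ) ^ d)⁻¹ * #P ≤ #{f ∈ P | ∀ e ∈ S, f e = c e} :=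
    inv_mul_le_of_le_mul₀ (by positivity) (by positivity) hP_le
  have hsplit : (#{f ∈ P | ∀ e ∈ S, f e = c e} : ℝ) + #{f ∈ P | ¬ ∀ e ∈ S, f e = c e} = #P := by
    exact_mod_cast card_filter_add_card_filter_not (s := P) fun f => ∀ e ∈ S, f e = c e
  linarith

theorem card_filter_forall_exists_ne_le [Fintype E] [Nonempty A] (c : E → A)
    (S : κ → Finset E) {d : ℕ} (hcard : ∀ k, #(S k) ≤ d)
    (hdisj : Pairwise fun k l => Disjoint (S k) (S l)) (K : Finset κ) :
    (#{f : E → A | ∀ k ∈ K, ∃ e ∈ S k, f e ≠ c e} : ℝ)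
      ≤ (1 - ((Fintype.card A : ℝ) ^ d)⁻¹) ^ #K * Fintype.card (E → A) := by
  have hA : (1 : ℝ) ≤ Fintype.card A := Nat.one_le_cast.2 Fintype.card_pos
  have hfactor : 0 ≤ 1 - ((Fintype.card A : ℝ) ^ d)⁻¹ :=
    sub_nonneg.2 (inv_le_one_of_one_le₀ (one_le_pow₀ hA))
  classical
  induction K using Finset.induction_on with
  | empty => simp
  | insert k K hk ih =>
    set P : Finset (E → A) := {f | ∀ k ∈ K, ∃ e ∈ S k, f e ≠ c e} with hP
    have hinsert : ({f | ∀ l ∈ insert k K, ∃ e ∈ S l, f e ≠ c e} : Finset (E → A))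
        = {f ∈ P | ¬ ∀ e ∈ S k, f e = c e} := by
      ext f
      simp only [hP, mem_filter, mem_univ, true_and, forall_mem_insert, not_forall, exists_prop,
        and_comm, ne_eq]
    have hclosed : ∀ f ∈ P, (S k).piecewise c f ∈ P := by
      intro f hf
      simp only [hP, mem_filter, mem_univ, true_and] at hf ⊢
      intro l hl
      obtain ⟨e, he, hne⟩ := hf l hl
      have hek : e ∉ S k := disjoint_left.1 (hdisj (ne_of_mem_of_not_mem hl hk)) he
      exact ⟨e, he, by rwa [piecewise_eq_of_notMem _ _ _ hek]⟩
    rw [hinsert, card_insert_of_notMem hk]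
    calc (#{f ∈ P | ¬ ∀ e ∈ S k, f e = c e} : ℝ)
        ≤ (1 - ((Fintype.card A : ℝ) ^ d)⁻¹) * #P := by
          convert card_filter_not_forall_eq_le c (hcard k) hclosed
      _ ≤ (1 - ((Fintype.card A : ℝ) ^ d)⁻¹)
          * ((1 - ((Fintype.card A : ℝ) ^ d)⁻¹) ^ #K * Fintype.card (E → A)) := by gcongr
      _ = (1 - ((Fintype.card A : ℝ) ^ d)⁻¹) ^ (#K + 1) * Fintype.card (E → A) := by ring

theorem exists_pairwiseDisjoint_card_le {α β : Type*} [DecidableEq β] (D : α → Finset β)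
    (s : Finset α) {d r : ℕ} (hne : ∀ i ∈ s, (D i).Nonempty)
    (hd : ∀ i ∈ s, #(D i) ≤ d) (hr : ∀ x, #{i ∈ s | x ∈ D i} ≤ r) :
    ∃ W ⊆ s, (W : Set α).PairwiseDisjoint D ∧ #s ≤ #W * d * r := by
  classical
  -- With constant radii, Vitali's covering lemma yields a maximal disjoint subfamily.
  obtain ⟨u, hus, hdisj, hmeet⟩ := Vitali.exists_disjoint_subfamily_covering_enlargement
    (fun i => (D i : Set β)) s (fun _ => 0) 2 one_lt_two (fun _ _ => le_rfl) 0 (fun _ _ => le_rfl)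
    (fun i hi => hne i hi)
  lift u to Finset α using s.finite_toSet.subset hus
  have hcover : s ⊆ (u.biUnion D).biUnion fun x => {i ∈ s | x ∈ D i} := by
    intro i hi
    obtain ⟨j, hj, ⟨x, hxi, hxj⟩, -⟩ := hmeet i hi
    exact mem_biUnion.2 ⟨x, mem_biUnion.2 ⟨j, hj, hxj⟩, mem_filter.2 ⟨hi, hxi⟩⟩
  refine ⟨u, coe_subset.1 hus, fun i hi j hj hij => disjoint_coe.1 (hdisj hi hj hij), ?_⟩
  calc #s ≤ #(u.biUnion D) * r := (card_le_card hcover).trans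
        (card_biUnion_le_card_mul _ _ _ fun x _ => hr x)
    _ ≤ #u * d * r := by
        gcongr
        exact card_biUnion_le_card_mul _ _ _ fun i hi => hd i (hus hi)

end Counting

section Estimates

open Filter Asymptotics

-- `1024 = 4 * 2 ^ 8` makes the exponent `4 * m * log N - m ^ 2 / 2 ^ 8` negative.
theorem pow_mul_pow_lt_one_of_log_lt {N m : ℕ} (h : 1024 * Real.log N < m) :
    ((N : ℝ) ^ 2) ^ (m + m) * (1 - (2 ^ 8 : ℝ)⁻¹) ^ (m * m) < 1 := by
  have hm : (0 : ℝ) < m := (mul_nonneg (by norm_num) (Real.log_natCast_nonneg N)).trans_lt h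
  calc ((N : ℝ) ^ 2) ^ (m + m) * (1 - (2 ^ 8 : ℝ)⁻¹) ^ (m * m)
      ≤ (Real.exp (Real.log N) ^ 2) ^ (m + m) * Real.exp (-(2 ^ 8 : ℝ)⁻¹) ^ (m * m) := by
        gcongr
        · exact Real.le_exp_log N
        · exact Real.one_sub_le_exp_neg _
    _ = Real.exp (m * (1024 * Real.log N - m) / 256) := by
        simp only [← Real.exp_nat_mul, ← Real.exp_add]
        congr 1
        push_cast
        ring
    _ < 1 := Real.exp_lt_one_iff.2 (div_neg_of_neg_of_pos
        (mul_neg_of_pos_of_neg hm (sub_neg.2 h)) (by norm_num))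

theorem eventually_mul_log_add_lt (a b : ℝ) {ε : ℝ} (hε : 0 < ε) :
    ∀ᶠ x : ℝ in atTop, a * Real.log x + b < ε * x := by
  have hlittle : (fun x => a * Real.log x + b) =o[atTop] (id : ℝ → ℝ) :=
    (Real.isLittleO_log_id_atTop.const_mul_left a).add (isLittleO_const_id_atTop b)
  filter_upwards [hlittle.bound (half_pos hε), eventually_gt_atTop 0] with x hbound hx
  calc a * Real.log x + b ≤ ε / 2 * x := by
        simpa [abs_of_pos hx] using (le_abs_self _).trans hbound
    _ < ε * x := by gcongr; exact half_lt_self hε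

end Estimates

/-- The complete multipartite graph with parts `{x} × Bool`, from which, for each pair `x ≠ y`,
the edge joining `(x, f (x, y))` to `(y, f (y, x))` is deleted: `f (x, y)` selects the end in
part `x` of the edge missing between the parts of `x` and `y`. -/
def prunedCocktailGraph {ι : Type*} (f : ι × ι → Bool) : SimpleGraph (ι × Bool) where
  Adj u v := u.1 ≠ v.1 ∧ ¬ (f (u.1, v.1) = u.2 ∧ f (v.1, u.1) = v.2)
  symm := ⟨fun _ _ h => ⟨h.1.symm, fun h' => h.2 h'.symm⟩⟩
  loopless := ⟨fun _ h => h.1 rfl⟩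

/-- A family of one- or two-element vertex sets, encoded as unordered pairs, which together meet
each part `{x} × Bool` in at most one vertex, no vertex being used by two members. -/
def IsTransversalFamily {ι κ : Type*} (z : κ → Sym2 (ι × Bool)) : Prop :=
  ∀ k l, ∀ u ∈ z k, ∀ v ∈ z l, u.1 = v.1 → k = l ∧ u = v

/-- In every transversal family of `m` left and `m` right members, some left member sends no edge
of `G` to some right member. The random choice of missing edges achieves this for small `m`. -/
def SeparatesTransversals {ι : Type*} (G : SimpleGraph (ι × Bool)) (m : ℕ) : Prop :=
  ∀ z : Fin m ⊕ Fin m → Sym2 (ι × Bool), IsTransversalFamily z →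
    ∃ k l, ∀ u ∈ z (.inl k), ∀ v ∈ z (.inr l), ¬ G.Adj u v

section RandomPruning

open Finset

variable {ι : Type*}

/-- The coordinates of `f : ι × ι → Bool` which decide the edges of `prunedCocktailGraph f`
between the vertex sets `p` and `q`. -/
def crossCoordinates [DecidableEq ι] (p q : Sym2 (ι × Bool)) : Finset (ι × ι) :=
  (p.map Prod.fst).toFinset ×ˢ (q.map Prod.fst).toFinset ∪
    (q.map Prod.fst).toFinset ×ˢ (p.map Prod.fst).toFinset

theorem card_toFinset_map_fst_le [DecidableEq ι] (p : Sym2 (ι × Bool)) :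
    #((p.map Prod.fst).toFinset) ≤ 2 := by
  rw [Sym2.card_toFinset]
  split_ifs <;> norm_num

theorem card_crossCoordinates_le [DecidableEq ι] (p q : Sym2 (ι × Bool)) :
    #(crossCoordinates p q) ≤ 8 := by
  have hp := card_toFinset_map_fst_le p
  have hq := card_toFinset_map_fst_le q
  calc #(crossCoordinates p q)
      ≤ #((p.map Prod.fst).toFinset) * #((q.map Prod.fst).toFinset)
        + #((q.map Prod.fst).toFinset) * #((p.map Prod.fst).toFinset) := by
        exact (card_union_le _ _).trans_eq (by rw [card_product, card_product])
    _ ≤ 2 * 2 + 2 * 2 := by gcongr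

theorem IsTransversalFamily.disjoint_crossCoordinates [DecidableEq ι] {κ₁ κ₂ : Type*}
    {z : κ₁ ⊕ κ₂ → Sym2 (ι × Bool)} (hz : IsTransversalFamily z) :
    Pairwise fun k l : κ₁ × κ₂ => Disjoint (crossCoordinates (z (.inl k.1)) (z (.inr k.2)))
      (crossCoordinates (z (.inl l.1)) (z (.inr l.2))) := by
  have index_unique : ∀ {a b} {x : ι}, x ∈ (z a).map Prod.fst → x ∈ (z b).map Prod.fst → a = b := by
    intro a b x ha hb
    obtain ⟨u, hu, rfl⟩ := Sym2.mem_map.1 ha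
    obtain ⟨v, hv, hvu⟩ := Sym2.mem_map.1 hb
    exact (hz a b u hu v hv hvu.symm).1
  rintro ⟨k, l⟩ ⟨k', l'⟩ hne
  refine disjoint_left.2 fun ⟨x, y⟩ h h' => hne ?_
  simp only [crossCoordinates, mem_union, mem_product, Sym2.mem_toFinset] at h h'
  rcases h with ⟨hx, hy⟩ | ⟨hx, hy⟩ <;> rcases h' with ⟨hx', hy'⟩ | ⟨hx', hy'⟩ <;>
    simpa [and_comm] using And.intro (index_unique hx hx') (index_unique hy hy')

theorem IsTransversalFamily.exists_side_eq {κ : Type*} {z : κ → Sym2 (ι × Bool)}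
    (hz : IsTransversalFamily z) : ∃ s : ι → Bool, ∀ k, ∀ u ∈ z k, s u.1 = u.2 := by
  classical
  refine ⟨fun x => decide (∃ k, (x, true) ∈ z k), ?_⟩
  rintro k ⟨x, b⟩ hu
  cases b with
  | true => exact decide_eq_true ⟨k, hu⟩
  | false =>
    refine decide_eq_false ?_
    rintro ⟨l, hl⟩
    simpa using (hz k l _ hu _ hl rfl).2

open Classical in
theorem IsTransversalFamily.card_filter_forall_adj_le [Fintype ι] {κ₁ κ₂ : Type*}
    [Fintype κ₁] [Fintype κ₂] {z : κ₁ ⊕ κ₂ → Sym2 (ι × Bool)} (hz : IsTransversalFamily z) :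
    (#{f | ∀ k l, ∃ u ∈ z (.inl k), ∃ v ∈ z (.inr l), (prunedCocktailGraph f).Adj u v} : ℝ)
      ≤ (1 - (2 ^ 8 : ℝ)⁻¹) ^ (Fintype.card κ₁ * Fintype.card κ₂)
        * Fintype.card (ι × ι → Bool) := by
  obtain ⟨s, hs⟩ := hz.exists_side_eq
  have hcount := card_filter_forall_exists_ne_le (fun e : ι × ι => s e.1)
    (fun k : κ₁ × κ₂ => crossCoordinates (z (.inl k.1)) (z (.inr k.2)))
    (fun _ => card_crossCoordinates_le _ _) hz.disjoint_crossCoordinates univ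
  rw [card_univ, Fintype.card_prod, Fintype.card_bool, Nat.cast_ofNat] at hcount
  refine le_trans (Nat.cast_le.2 (card_le_card ?_)) hcount
  intro f hf
  simp only [mem_filter, mem_univ, true_and, true_implies, Prod.forall] at hf ⊢
  intro k l
  obtain ⟨u, hu, v, hv, -, hadj⟩ := hf k l
  have hux : u.1 ∈ ((z (.inl k)).map Prod.fst).toFinset :=
    Sym2.mem_toFinset.2 (Sym2.mem_map.2 ⟨u, hu, rfl⟩)
  have hvy : v.1 ∈ ((z (.inr l)).map Prod.fst).toFinset :=
    Sym2.mem_toFinset.2 (Sym2.mem_map.2 ⟨v, hv, rfl⟩)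
  by_contra! hagree
  refine hadj ⟨?_, ?_⟩
  · rw [← hs _ u hu]
    exact hagree _ (mem_union_left _ (mem_product.2 ⟨hux, hvy⟩))
  · rw [← hs _ v hv]
    exact hagree _ (mem_union_right _ (mem_product.2 ⟨hvy, hux⟩))

theorem card_sym2_le_sq (V : Type*) [Fintype V] :
    Fintype.card (Sym2 V) ≤ Fintype.card V ^ 2 := by
  rw [sq, ← Fintype.card_prod]
  exact Fintype.card_le_of_surjective _ Sym2.mk_surjective

theorem exists_separatesTransversals [Fintype ι] {m : ℕ}
    (hm : 1024 * Real.log (Fintype.card (ι × Bool)) < m) :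
    ∃ f : ι × ι → Bool, SeparatesTransversals (prunedCocktailGraph f) m := by
  classical
  by_contra! hnone
  let families : Finset (Fin m ⊕ Fin m → Sym2 (ι × Bool)) := {z | IsTransversalFamily z}
  let bad (z : Fin m ⊕ Fin m → Sym2 (ι × Bool)) : Finset (ι × ι → Bool) :=
    {f | ∀ k l, ∃ u ∈ z (.inl k), ∃ v ∈ z (.inr l), (prunedCocktailGraph f).Adj u v}
  have hcover : univ ⊆ families.biUnion bad := by
    intro f _
    have hf := hnone f
    simp only [SeparatesTransversals, not_forall, not_exists, not_not, exists_prop] at hf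
    obtain ⟨z, hz, hadj⟩ := hf
    exact mem_biUnion.2 ⟨z, by simpa [families] using hz, by simpa [bad] using hadj⟩
  have hfamilies : (#families : ℝ) ≤ ((Fintype.card (ι × Bool) : ℝ) ^ 2) ^ (m + m) := by
    have hle : #families ≤ Fintype.card (Sym2 (ι × Bool)) ^ (m + m) := by
      simpa using card_le_univ families
    exact_mod_cast hle.trans (Nat.pow_le_pow_left (card_sym2_le_sq _) _)
  have hbad : ∀ z ∈ families, (#(bad z) : ℝ)
      ≤ (1 - (2 ^ 8 : ℝ)⁻¹) ^ (m * m) * Fintype.card (ι × ι → Bool) := by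
    intro z hz
    have hcount := (mem_filter.1 hz).2.card_filter_forall_adj_le
    rw [Fintype.card_fin] at hcount
    convert hcount
  have hpos : (0 : ℝ) < Fintype.card (ι × ι → Bool) := Nat.cast_pos.2 Fintype.card_pos
  refine lt_irrefl (Fintype.card (ι × ι → Bool) : ℝ) ?_
  calc (Fintype.card (ι × ι → Bool) : ℝ)
      ≤ ∑ z ∈ families, (#(bad z) : ℝ) := by
        exact_mod_cast (card_le_card hcover).trans card_biUnion_le
    _ ≤ #families * ((1 - (2 ^ 8 : ℝ)⁻¹) ^ (m * m) * Fintype.card (ι × ι → Bool)) := by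
        simpa only [nsmul_eq_mul] using sum_le_card_nsmul _ _ _ hbad
    _ ≤ ((Fintype.card (ι × Bool) : ℝ) ^ 2) ^ (m + m)
          * ((1 - (2 ^ 8 : ℝ)⁻¹) ^ (m * m) * Fintype.card (ι × ι → Bool)) := by
        gcongr
    _ < Fintype.card (ι × ι → Bool) := by
        rw [← mul_assoc]
        exact mul_lt_of_lt_one_left hpos (pow_mul_pow_lt_one_of_log_lt hm)

end RandomPruning

section Minors

open Finset

variable {ι : Type*}

theorem connected_induce_prunedCocktailGraph (f : ι × ι → Bool) {x y : ι} (hxy : x ≠ y) :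
    ((prunedCocktailGraph f).induce
      ({v | v.1 = x} ∪ {v | v.1 = y} : Set (ι × Bool))).Connected := by
  set X : Set (ι × Bool) := {v | v.1 = x} ∪ {v | v.1 = y}
  let inX (a : Bool) : X := ⟨(x, a), .inl rfl⟩
  let inY (b : Bool) : X := ⟨(y, b), .inr rfl⟩
  have hfrom_x : ∀ b, ((prunedCocktailGraph f).induce X).Adj (inX (!f (x, y))) (inY b) :=
    fun b => ⟨hxy, fun h => by simpa [inX, inY] using h.1⟩
  have hfrom_y : ∀ a, ((prunedCocktailGraph f).induce X).Adj (inX a) (inY (!f (y, x))) :=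
    fun a => ⟨hxy, fun h => by simpa [inX, inY] using h.2⟩
  refine SimpleGraph.connected_iff_exists_forall_reachable _ |>.2 ⟨inX (!f (x, y)), ?_⟩
  rintro ⟨⟨w, a⟩, rfl | rfl⟩
  · exact (hfrom_x _).reachable.trans (hfrom_y a).symm.reachable
  · exact (hfrom_x a).reachable

theorem hasQuasiKMinor_prunedCocktailGraph {t : ℕ} (f : Fin t × Fin t → Bool) :
    HasQuasiKMinor (prunedCocktailGraph f) t := by
  refine ⟨fun i => {v | v.1 = i}, fun i => ⟨(i, true), rfl⟩, fun i j hij => ?_,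
    fun i j hij => connected_induce_prunedCocktailGraph f hij⟩
  exact Set.disjoint_left.2 fun v hi hj => hij (hi.symm.trans hj)

theorem pairwise_adj_of_connected_induce_of_card_le_two {V : Type*} {G : SimpleGraph V}
    {s : Finset V} (hconn : (G.induce (s : Set V)).Connected) (hcard : #s ≤ 2) :
    (s : Set V).Pairwise G.Adj := by
  classical
  intro u hu v hv huv
  have : Nontrivial (s : Set V) := ⟨⟨u, hu⟩, ⟨v, hv⟩, fun h => huv (congrArg Subtype.val h)⟩
  obtain ⟨⟨w, hw⟩, huw⟩ := hconn.preconnected.exists_adj_of_nontrivial ⟨u, hu⟩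
  have hs : {u, v} = s :=
    eq_of_subset_of_card_le (insert_subset hu (singleton_subset_iff.2 hv))
      (by rwa [card_pair huv])
  have hw_mem : w = u ∨ w = v := by simpa [← hs] using hw
  obtain rfl | rfl := hw_mem
  · exact absurd huw (SimpleGraph.irrefl _)
  · exact huw

theorem exists_sym2_toFinset_eq {V : Type*} [DecidableEq V] {s : Finset V} (hne : s.Nonempty)
    (hcard : #s ≤ 2) :
    ∃ p : Sym2 V, p.toFinset = s := by
  obtain h | h : #s = 1 ∨ #s = 2 := by have := hne.card_pos; omega
  · obtain ⟨u, rfl⟩ := card_eq_one.1 h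
    exact ⟨s(u, u), Sym2.toFinset_mk_eq.trans (pair_eq_singleton u)⟩
  · obtain ⟨u, v, -, rfl⟩ := card_eq_two.1 h
    exact ⟨s(u, v), Sym2.toFinset_mk_eq⟩

theorem card_filter_mem_map_fst_le_two [DecidableEq ι] {σ : Type*} [Fintype σ]
    {z : σ → Sym2 (ι × Bool)} (hdisj : ∀ i j v, v ∈ z i → v ∈ z j → i = j) (x : ι) :
    #{i | x ∈ ((z i).map Prod.fst).toFinset} ≤ 2 := by
  classical
  have hsub : ({i | x ∈ ((z i).map Prod.fst).toFinset} : Finset σ)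
      ⊆ univ.biUnion fun b : Bool => {i | (x, b) ∈ z i} := by
    intro i hi
    obtain ⟨⟨_, b⟩, hv, rfl⟩ := Sym2.mem_map.1 (Sym2.mem_toFinset.1 (mem_filter.1 hi).2)
    exact mem_biUnion.2 ⟨b, mem_univ b, mem_filter.2 ⟨mem_univ i, hv⟩⟩
  refine (card_le_card hsub).trans (card_biUnion_le_card_mul _ _ 1 fun b _ => ?_)
  exact card_le_one.2 fun i hi j hj => hdisj i j _ (mem_filter.1 hi).2 (mem_filter.1 hj).2

theorem SeparatesTransversals.card_le_of_pairwise_adj {G : SimpleGraph (ι × Bool)} {m : ℕ}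
    (hG : SeparatesTransversals G m) {σ : Type*} [Fintype σ] {z : σ → Sym2 (ι × Bool)}
    (hinj : ∀ i, ∀ u ∈ z i, ∀ v ∈ z i, u.1 = v.1 → u = v)
    (hdisj : ∀ i j v, v ∈ z i → v ∈ z j → i = j)
    (hadj : Pairwise fun i j => ∃ u ∈ z i, ∃ v ∈ z j, G.Adj u v) :
    Fintype.card σ ≤ 8 * m := by
  classical
  let parts (i : σ) : Finset ι := ((z i).map Prod.fst).toFinset
  have mem_parts : ∀ {i v}, v ∈ z i → v.1 ∈ parts i := fun {i v} hv =>
    Sym2.mem_toFinset.2 (Sym2.mem_map.2 ⟨v, hv, rfl⟩)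
  obtain ⟨W, -, hWdisj, hW⟩ := exists_pairwiseDisjoint_card_le parts univ (d := 2) (r := 2)
    (fun i _ => ⟨_, mem_parts (z i).out_fst_mem⟩) (fun i _ => card_toFinset_map_fst_le _)
    (card_filter_mem_map_fst_le_two hdisj)
  suffices hWm : #W < 2 * m + 1 by
    rw [card_univ] at hW
    omega
  by_contra! hlarge
  obtain ⟨φ⟩ : Nonempty (Fin m ⊕ Fin m ↪ W) := by
    apply Function.Embedding.nonempty_of_card_le
    simp only [Fintype.card_sum, Fintype.card_fin, Fintype.card_coe]
    omega
  have htransversal : IsTransversalFamily fun k => z (φ k) := by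
    intro k l u hu v hv huv
    have hkl : (φ k : σ) = φ l := hWdisj.elim_finset (φ k).2 (φ l).2 u.1 (mem_parts hu)
      (huv ▸ mem_parts hv)
    exact ⟨φ.injective (Subtype.ext hkl), hinj _ u hu v (hkl ▸ hv) huv⟩
  obtain ⟨k, l, hkl⟩ := hG _ htransversal
  have hne : (φ (.inl k) : σ) ≠ φ (.inr l) := fun h =>
    Sum.inl_ne_inr (φ.injective (Subtype.ext h))
  obtain ⟨u, hu, v, hv, huv⟩ := hadj hne
  exact hkl u hu v hv huv

theorem card_small_bags_le {f : ι × ι → Bool} {m n : ℕ}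
    (hf : SeparatesTransversals (prunedCocktailGraph f) m) {B : Fin n → Finset (ι × Bool)}
    (hB : IsKMinorBags (prunedCocktailGraph f) fun i => (B i : Set (ι × Bool))) :
    #{i | #(B i) ≤ 2} ≤ 8 * m := by
  classical
  obtain ⟨hne, hdisj, hconn, hadj⟩ := hB
  have hpair : ∀ i : {i // #(B i) ≤ 2}, ∃ p : Sym2 (ι × Bool), p.toFinset = B i :=
    fun i => exists_sym2_toFinset_eq (hne i) i.2
  choose z hz using hpair
  have mem_z : ∀ {i v}, v ∈ z i ↔ v ∈ B i := fun {i v} => by rw [← hz i, Sym2.mem_toFinset]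
  rw [← Fintype.card_subtype]
  refine hf.card_le_of_pairwise_adj (z := z) ?_ ?_ ?_
  · intro i u hu v hv huv
    by_contra hne
    exact (pairwise_adj_of_connected_induce_of_card_le_two (hconn i) i.2
      (mem_z.1 hu) (mem_z.1 hv) hne).1 huv
  · intro i j v hi hj
    by_contra hij
    exact Set.disjoint_left.1 (hdisj (Subtype.coe_ne_coe.2 hij)) (mem_z.1 hi) (mem_z.1 hj)
  · intro i j hij
    obtain ⟨u, hu, v, hv, huv⟩ := hadj i j (Subtype.coe_ne_coe.2 hij)
    exact ⟨u, mem_z.2 hu, v, mem_z.2 hv, huv⟩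

theorem card_mul_le_card_of_pairwiseDisjoint {κ V : Type*} [Fintype V] {B : κ → Finset V}
    {s : Finset κ} {d : ℕ} (hdisj : (s : Set κ).PairwiseDisjoint B) (hd : ∀ i ∈ s, d ≤ #(B i)) :
    #s * d ≤ Fintype.card V := by
  classical
  calc #s * d ≤ ∑ i ∈ s, #(B i) := card_nsmul_le_sum s _ d hd
    _ = #(s.biUnion B) := (card_biUnion hdisj).symm
    _ ≤ Fintype.card V := card_le_univ _

theorem three_mul_le_of_hasKMinor [Fintype ι] {f : ι × ι → Bool} {m n : ℕ}
    (hf : SeparatesTransversals (prunedCocktailGraph f) m)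
    (hminor : HasKMinor (prunedCocktailGraph f) n) :
    3 * n ≤ 2 * Fintype.card ι + 24 * m := by
  obtain ⟨B, hB⟩ := hminor
  lift B to Fin n → Finset (ι × Bool) using fun i => Set.toFinite (B i)
  have hsmall : #{i | #(B i) ≤ 2} ≤ 8 * m := card_small_bags_le hf hB
  have hlarge : #{i | ¬ #(B i) ≤ 2} * 3 ≤ Fintype.card ι * 2 := by
    rw [← Fintype.card_bool, ← Fintype.card_prod]
    refine card_mul_le_card_of_pairwiseDisjoint (B := B)
      (fun i _ j _ hij => disjoint_coe.1 (hB.2.1 hij)) fun i hi => ?_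
    exact not_le.1 (mem_filter.1 hi).2
  have hsplit : #{i | #(B i) ≤ 2} + #{i | ¬ #(B i) ≤ 2} = n := by
    simpa using card_filter_add_card_filter_not (s := univ) fun i => #(B i) ≤ 2
  omega

end Minors

theorem statement0_general (t : ℕ) :
    ∃ G : SimpleGraph (Fin t × Bool), HasQuasiKMinor G t ∧
      ∀ n, HasKMinor G n → (n : ℝ) ≤ 2 / 3 * t + (8192 * Real.log (2 * t) + 8) := by
  have hcard : (Fintype.card (Fin t × Bool) : ℝ) = 2 * t := by simp [mul_comm]
  have hlog : 0 ≤ 1024 * Real.log (2 * t) := by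
    rw [← hcard]
    exact mul_nonneg (by norm_num) (Real.log_natCast_nonneg _)
  obtain ⟨f, hf⟩ := exists_separatesTransversals (ι := Fin t)
    (m := ⌊1024 * Real.log (2 * t)⌋₊ + 1) (by rw [hcard]; exact_mod_cast Nat.lt_floor_add_one _)
  refine ⟨prunedCocktailGraph f, hasQuasiKMinor_prunedCocktailGraph f, fun n hn => ?_⟩
  have hle : (3 * n : ℝ) ≤ 2 * t + 24 * (⌊1024 * Real.log (2 * t)⌋₊ + 1) := by
    simpa using (Nat.cast_le (α := ℝ)).2 (three_mul_le_of_hasKMinor hf hn)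
  linarith [Nat.floor_le hlog]

theorem eventually_add_log_lt_ceil {ε : ℝ} (hε : 0 < ε) :
    ∀ᶠ t : ℕ in Filter.atTop,
      2 / 3 * t + (8192 * Real.log (2 * t) + 8) < (⌈(2 / 3 + ε) * (t : ℝ)⌉₊ : ℝ) := by
  have htwo_mul : Filter.Tendsto (fun t : ℕ => 2 * (t : ℝ)) Filter.atTop Filter.atTop :=
    tendsto_natCast_atTop_atTop.const_mul_atTop two_pos
  filter_upwards [htwo_mul.eventually (eventually_mul_log_add_lt 8192 8 (half_pos hε))] with t ht
  linarith [Nat.le_ceil ((2 / 3 + ε) * (t : ℝ))]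

/-- For every `ε > 0` there exists `t₀` such that for every `t ≥ t₀` there is a finite simple
graph `G` that admits a quasi-`K_t`-minor but does not admit a `K_⌈(2/3+ε)t⌉`-minor. -/
theorem statement0 (ε : ℝ) (hε : 0 < ε) :
    ∃ t₀ : ℕ, ∀ t : ℕ, t₀ ≤ t →
      ∃ (V : Type) (_ : Fintype V) (G : SimpleGraph V),
        HasQuasiKMinor G t ∧ ¬ HasKMinor G ⌈(2 / 3 + ε) * (t : ℝ)⌉₊ := by
  obtain ⟨t₀, ht₀⟩ := Filter.eventually_atTop.1 (eventually_add_log_lt_ceil hε)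
  refine ⟨t₀, fun t ht => ?_⟩
  obtain ⟨G, hquasi, hminor⟩ := statement0_general t
  exact ⟨Fin t × Bool, inferInstance, G, hquasi, fun h => (hminor _ h).not_gt (ht₀ t ht)⟩
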